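/- arXiv:1406.3464 — 2 statements merged into one kernel-verified Lean document; each statement's English description precedes it below -/
import Mathlib

section
/- If every n-maximal subgroup of a finite group G is K-𝔘-subnormal in G, then every (n+1)-maximal subgroup of G is K-𝔘-subnormal in G. -/
open Subgroup

/-- A finite group is supersoluble if it has a normal series, all of whose terms are
normal in the whole group, with cyclic factors. -/
def IsSupersoluble (G : Type*) [Group G] : Prop :=
  ∃ (n : ℕ) (c : Fin (n + 1) → Subgroup G) (hc : ∀ i, (c i).Normal),
    c 0 = ⊥ ∧ c (Fin.last n) = ⊤ ∧
    ∀ i : Fin n, c i.castSucc ≤ c i.succ ∧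
      haveI := (hc i.castSucc).subgroupOf (c i.succ)
      IsCyclic (↥(c i.succ) ⧸ ((c i.castSucc).subgroupOf (c i.succ)))

/-- `H` is a maximal subgroup of `K`, where `H ≤ K` are subgroups of a common group. -/
def IsMaximalIn {G : Type*} [Group G] (H K : Subgroup G) : Prop :=
  H ≤ K ∧ IsCoatom (H.subgroupOf K)

/-- The `n`-maximal subgroups of `G`: `0`-maximal is `G` itself, and an `(n+1)`-maximal
subgroup is a maximal subgroup of some `n`-maximal subgroup. -/
def IsNMaximal {G : Type*} [Group G] : ℕ → Subgroup G → Prop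
  | 0, H => H = ⊤
  | n + 1, H => ∃ K : Subgroup G, IsNMaximal n K ∧ IsMaximalIn H K

/-- `H` is `K`-`𝔘`-subnormal in `K`: there is a chain of subgroups
`H = H₀ ≤ H₁ ≤ ⋯ ≤ Hₜ = K` such that at each step either `H_{i-1}` is normal in `H_i`
or `H_i` modulo the core of `H_{i-1}` in `H_i` is supersoluble. -/
def IsKUSubnormalIn {G : Type*} [Group G] (H K : Subgroup G) : Prop :=
  ∃ (n : ℕ) (c : Fin (n + 1) → Subgroup G),
    c 0 = H ∧ c (Fin.last n) = K ∧
    ∀ i : Fin n, c i.castSucc ≤ c i.succ ∧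
      (((c i.castSucc).subgroupOf (c i.succ)).Normal ∨
        IsSupersoluble (↥(c i.succ) ⧸ ((c i.castSucc).subgroupOf (c i.succ)).normalCore))

/-- `H` is `K`-`𝔘`-subnormal in `G`. -/
def IsKUSubnormal {G : Type*} [Group G] (H : Subgroup G) : Prop :=
  IsKUSubnormalIn H ⊤

/-- `H` is `𝔘`-subnormal in `G`: there is a chain of subgroups
`H = H₀ ≤ H₁ ≤ ⋯ ≤ Hₙ = G` with `H_i` modulo the core of `H_{i-1}` in `H_i`
supersoluble at each step. -/
def IsUSubnormal {G : Type*} [Group G] (H : Subgroup G) : Prop :=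
  ∃ (n : ℕ) (c : Fin (n + 1) → Subgroup G),
    c 0 = H ∧ c (Fin.last n) = ⊤ ∧
    ∀ i : Fin n, c i.castSucc ≤ c i.succ ∧
      IsSupersoluble (↥(c i.succ) ⧸ ((c i.castSucc).subgroupOf (c i.succ)).normalCore)

/-- The supersoluble residual `G^𝔘` of `G`: the intersection of all normal subgroups `N`
of `G` with `G/N` supersoluble. -/
def ssResidual (G : Type*) [Group G] : Subgroup G :=
  ⨅ N ∈ {N : Subgroup G | ∃ hN : N.Normal, haveI := hN; IsSupersoluble (G ⧸ N)}, N

/-- `N` is a minimal normal subgroup of `G`. -/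
def IsMinimalNormal {G : Type*} [Group G] (N : Subgroup G) : Prop :=
  N.Normal ∧ N ≠ ⊥ ∧ ∀ M : Subgroup G, M.Normal → M ≤ N → M ≠ ⊥ → M = N

/-- `G` is minimal nonsupersoluble: not supersoluble, but all proper subgroups are. -/
def IsMinimalNonsupersoluble (G : Type*) [Group G] : Prop :=
  ¬ IsSupersoluble G ∧ ∀ H : Subgroup G, H ≠ ⊤ → IsSupersoluble H

/-- `G` is an `SDH`-group: minimal nonsupersoluble with `G^𝔘` a minimal normal subgroup. -/
def IsSDH (G : Type*) [Group G] : Prop :=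
  IsMinimalNonsupersoluble G ∧ IsMinimalNormal (ssResidual G)

/-- `H` is a Sylow `p`-subgroup of its ambient (finite) group. -/
def IsSylowSubgroup {G : Type*} [Group G] (p : ℕ) (H : Subgroup G) : Prop :=
  IsPGroup p H ∧ ¬ p ∣ H.index

/-- A finite group is Ore dispersive if, enumerating the prime divisors of `|G|`
in decreasing order as `p₁ > p₂ > ⋯ > pₙ`, for every `i` it has a normal subgroup of
order `p₁^{a₁} ⋯ p_i^{a_i}`. -/
def OreDispersive (G : Type*) [Group G] : Prop :=
  ∀ p : ℕ, p.Prime → ∃ N : Subgroup G, N.Normal ∧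
    Nat.card N =
      ∏ q ∈ (Nat.card G).primeFactors.filter (fun q => p ≤ q),
        q ^ (Nat.card G).factorization q

/-- `A/B` is a chief factor of `G`. -/
def IsChiefFactor {G : Type*} [Group G] (A B : Subgroup G) : Prop :=
  A.Normal ∧ B ≤ A ∧ ∃ hB : B.Normal,
    haveI := hB
    IsMinimalNormal (A.map (QuotientGroup.mk' B))

/-- The subgroups `H` and `K` of `G` are conjugate in `G`. -/
def ConjSubgroup {G : Type*} [Group G] (H K : Subgroup G) : Prop :=
  ∃ g : G, K = H.map (MulAut.conj g).toMonoidHom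

/-- The Frattini subgroup of a subgroup `H` of `G`, as a subgroup of `G`. -/
def frattiniIn {G : Type*} [Group G] (H : Subgroup G) : Subgroup G :=
  (frattini H).map H.subtype

/-- `G = P ⋊ (Q ⋊ R)` as an internal statement about subgroups `P`, `Q`, `R` of `G`. -/
def IsInternalSemidirect3 {G : Type*} [Group G] (P Q R : Subgroup G) : Prop :=
  P.Normal ∧ P ⊓ (Q ⊔ R) = ⊥ ∧ P ⊔ Q ⊔ R = ⊤ ∧
    (Q.subgroupOf (Q ⊔ R)).Normal ∧ Q ⊓ R = ⊥

/-- `G = P ⋊ (Q ⋊ (R ⋊ T))` as an internal statement about subgroups of `G`. -/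
def IsInternalSemidirect4 {G : Type*} [Group G] (P Q R T : Subgroup G) : Prop :=
  P.Normal ∧ P ⊓ (Q ⊔ R ⊔ T) = ⊥ ∧ P ⊔ Q ⊔ R ⊔ T = ⊤ ∧
    (Q.subgroupOf (Q ⊔ R ⊔ T)).Normal ∧ Q ⊓ (R ⊔ T) = ⊥ ∧
    (R.subgroupOf (R ⊔ T)).Normal ∧ R ⊓ T = ⊥

/-!
Let `L` be an `n`-maximal subgroup. Each maximal subgroup `M` of `L` is joined to `G` by a
`K`-`𝔘`-subnormal chain; consider the step `A ≤ B` at which the intersection with `L` stops being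
`M`. There `A ∩ L = M` and `L ≤ B`, so either `M` is normal in `L` or `L / C` is supersoluble for
some normal `C ≤ M` of `L`, and in both cases `|L : M|` is prime. By Huppert's theorem `L` is
supersoluble. Hence a maximal subgroup `K` of `L` is supersoluble, and every `H ≤ K` reaches `K` in
one supersoluble step.

For Huppert's theorem it suffices, by induction, to find a cyclic minimal normal subgroup `N`. Let
`P` be a Sylow subgroup for the largest prime `p`; it is normal, since otherwise a maximal subgroup
above its normalizer would have prime index `≡ 1 (mod p)`. Let `Φ` be the smallest normal subgroup
of `P` with elementary abelian quotient. If `Φ = 1`, a minimal normal `N ≤ P` has a complement by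
Maschke's theorem, so its order is a prime index. If `Φ ≠ 1`, take `N ≤ Φ`. The group induced on
the cyclic factors of a series from `N` to `P` is abelian of exponent dividing
`φ(|P|) = p ^ k * (p - 1)`, and some `p`-power of each element acting trivially on those factors
centralizes `P / N`, hence centralizes `Φ` and `N`. Normal subgroups acting on `N` by `p`-elements
act trivially, so `G` acts on `N` through commuting operators killed by `X ^ (p ^ k * (p - 1)) - 1`,
which splits over `𝔽_p`. By irreducibility each of them is a scalar, so `N` is cyclic.
-/

section Series

open Relation QuotientGroup

theorem reflTransGen_iff_exists_fin_chain {α : Type*} {r : α → α → Prop} {a b : α} :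
    ReflTransGen r a b ↔ ∃ (n : ℕ) (c : Fin (n + 1) → α), c 0 = a ∧ c (Fin.last n) = b ∧
      ∀ i : Fin n, r (c i.castSucc) (c i.succ) := by
  constructor
  · intro h
    induction h using ReflTransGen.head_induction_on with
    | refl => exact ⟨0, fun _ => b, rfl, rfl, fun i => i.elim0⟩
    | @head a _ hab _ ih =>
      obtain ⟨n, c, rfl, rfl, hc⟩ := ih
      exact ⟨n + 1, Fin.cons a c, rfl, rfl, Fin.cases hab hc⟩
  · rintro ⟨n, c, rfl, rfl, hc⟩
    exact Fin.induction (motive := fun i => ReflTransGen r (c 0) (c i)) .refl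
      (fun i ih => ih.tail (hc i)) (Fin.last n)

theorem exists_step_of_reflTransGen {α : Type*} {r : α → α → Prop} {p : α → Prop} {a b : α}
    (h : ReflTransGen r a b) (ha : p a) (hb : ¬ p b) : ∃ x y, r x y ∧ p x ∧ ¬ p y := by
  induction h with
  | refl => exact absurd ha hb
  | @tail x y _ hxy ih =>
    by_cases hx : p x
    · exact ⟨x, y, hxy, hx, hb⟩
    · exact ih hx

variable {G H : Type*} [Group G] [Group H] {A B : Subgroup G}

theorem isCyclic_map_iff_exists_ker_sup_zpowers (f : G →* H) (hB : f.ker ≤ B) :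
    IsCyclic (B.map f) ↔ ∃ b, f.ker ⊔ zpowers b = B := by
  have map_eq_iff (b : G) : (zpowers b).map f = B.map f ↔ f.ker ⊔ zpowers b = B := by
    rw [map_eq_map_iff, sup_eq_left.2 hB, sup_comm]
  simp only [Subgroup.isCyclic_iff_exists_zpowers_eq_top, ← map_eq_iff, MonoidHom.map_zpowers]
  constructor
  · rintro ⟨g, hg⟩
    obtain ⟨b, -, rfl⟩ := mem_map.1 (hg ▸ mem_zpowers g)
    exact ⟨b, hg⟩
  · rintro ⟨b, hb⟩
    exact ⟨f b, hb⟩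

theorem isCyclic_quotient_subgroupOf_iff [A.Normal] (hAB : A ≤ B) :
    IsCyclic (B ⧸ A.subgroupOf B) ↔ ∃ b, A ⊔ zpowers b = B := by
  let f : B →* G ⧸ A := (mk' A).domRestrict B
  have ker_f : f.ker = A.subgroupOf B := by rw [MonoidHom.ker_domRestrict, ker_mk']
  have e : (B ⧸ A.subgroupOf B) ≃* B.map (mk' A) :=
    (quotientMulEquivOfEq ker_f.symm).trans
      ((quotientKerEquivRange f).trans (MulEquiv.subgroupCongr (MonoidHom.domRestrict_range B _)))
  rw [e.isCyclic, isCyclic_map_iff_exists_ker_sup_zpowers _ (by rwa [ker_mk']), ker_mk']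

theorem exists_comap_sup_zpowers_eq [A.Normal] (f : H →* G) (h : ∃ b, A ⊔ zpowers b = B) :
    ∃ c, A.comap f ⊔ zpowers c = B.comap f := by
  have hAB : A ≤ B := by
    obtain ⟨b, rfl⟩ := h
    exact le_sup_left
  let q := (mk' A).comp f
  have ker_q : q.ker = A.comap f := by rw [← MonoidHom.comap_ker, ker_mk']
  have : IsCyclic (B.map (mk' A)) :=
    (isCyclic_map_iff_exists_ker_sup_zpowers _ (by rwa [ker_mk'])).2 (by rwa [ker_mk'])
  have hle : (B.comap f).map q ≤ B.map (mk' A) := by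
    rw [← Subgroup.map_map]
    exact map_mono (map_comap_le f B)
  rw [← ker_q, ← isCyclic_map_iff_exists_ker_sup_zpowers q (ker_q ▸ comap_mono hAB)]
  exact isCyclic_of_le hle

/-- `A` and `B` are consecutive terms of a normal series with cyclic factors: both are normal
in `G`, and `B` is generated by `A` and one element, i.e. `A ≤ B` and `B / A` is cyclic. -/
structure NormalCyclicStep (A B : Subgroup G) : Prop where
  normal_left : A.Normal
  normal_right : B.Normal
  exists_sup_zpowers_eq : ∃ b, A ⊔ zpowers b = B

/-- `A` and `B` are joined by a series `A = A₀ ≤ ⋯ ≤ Aₜ = B` of normal subgroups of `G` with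
cyclic factors. -/
def NormalCyclicSeries : Subgroup G → Subgroup G → Prop :=
  ReflTransGen NormalCyclicStep

theorem NormalCyclicStep.le (h : NormalCyclicStep A B) : A ≤ B := by
  obtain ⟨b, rfl⟩ := h.exists_sup_zpowers_eq
  exact le_sup_left

theorem NormalCyclicSeries.le (h : NormalCyclicSeries A B) : A ≤ B := by
  induction h with
  | refl => exact le_rfl
  | tail _ h ih => exact ih.trans h.le

theorem isSupersoluble_iff : IsSupersoluble G ↔ NormalCyclicSeries (⊥ : Subgroup G) ⊤ := by
  refine Iff.trans ?_ reflTransGen_iff_exists_fin_chain.symm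
  constructor
  · rintro ⟨n, c, hc, h0, hn, hstep⟩
    refine ⟨n, c, h0, hn, fun i => ⟨hc _, hc _, ?_⟩⟩
    have := hc i.castSucc
    exact (isCyclic_quotient_subgroupOf_iff (hstep i).1).1 (hstep i).2
  · rintro ⟨n, c, h0, hn, hstep⟩
    have hc : ∀ i, (c i).Normal :=
      Fin.cases (h0 ▸ inferInstance) fun i => (hstep i).normal_right
    refine ⟨n, c, hc, h0, hn, fun i => ⟨(hstep i).le, ?_⟩⟩
    have := hc i.castSucc
    exact (isCyclic_quotient_subgroupOf_iff (hstep i).le).2 (hstep i).exists_sup_zpowers_eq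

theorem NormalCyclicSeries.comap (f : H →* G) (h : NormalCyclicSeries A B) :
    NormalCyclicSeries (A.comap f) (B.comap f) := by
  refine ReflTransGen.lift _ (fun A B hAB => ?_) _ _ h
  have := hAB.normal_left
  exact ⟨hAB.normal_left.comap f, hAB.normal_right.comap f,
    exists_comap_sup_zpowers_eq f hAB.exists_sup_zpowers_eq⟩

theorem NormalCyclicSeries.map {f : G →* H} (hf : Function.Surjective f)
    (h : NormalCyclicSeries A B) : NormalCyclicSeries (A.map f) (B.map f) := by
  refine ReflTransGen.lift _ (fun A B hAB => ?_) _ _ h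
  obtain ⟨hA, hB, b, rfl⟩ := hAB
  exact ⟨hA.map f hf, hB.map f hf, f b, by rw [Subgroup.map_sup, MonoidHom.map_zpowers]⟩

theorem NormalCyclicSeries.inf (P : Subgroup G) [P.Normal] (h : NormalCyclicSeries A B) :
    NormalCyclicSeries (A ⊓ P) (B ⊓ P) := by
  refine ReflTransGen.lift (· ⊓ P) (fun A B hAB => ?_) _ _ h
  have := hAB.normal_left
  have := hAB.normal_right
  obtain ⟨c, hc⟩ := exists_comap_sup_zpowers_eq P.subtype hAB.exists_sup_zpowers_eq
  refine ⟨inferInstance, inferInstance, c, ?_⟩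
  simp only [← subgroupOf_map_subtype, ← Subgroup.subtype_apply,
    ← MonoidHom.map_zpowers, ← Subgroup.map_sup]
  exact congrArg _ hc

theorem IsSupersoluble.of_injective (hG : IsSupersoluble G) {f : H →* G}
    (hf : Function.Injective f) : IsSupersoluble H := by
  rw [isSupersoluble_iff] at hG ⊢
  simpa only [MonoidHom.comap_bot, f.ker_eq_bot_iff.2 hf, comap_top] using hG.comap f

theorem IsSupersoluble.of_surjective (hG : IsSupersoluble G) {f : G →* H}
    (hf : Function.Surjective f) : IsSupersoluble H := by
  rw [isSupersoluble_iff] at hG ⊢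
  simpa only [Subgroup.map_bot, map_top_of_surjective f hf] using hG.map hf

theorem normalCyclicSeries_top_of_isSupersoluble_quotient (N : Subgroup G) [N.Normal]
    (h : IsSupersoluble (G ⧸ N)) : NormalCyclicSeries N ⊤ := by
  simpa only [MonoidHom.comap_bot, ker_mk', comap_top] using
    (isSupersoluble_iff.1 h).comap (mk' N)

end Series

section PrimeIndex

variable {G : Type*} [Group G]

theorem prime_index_of_isCoatom_of_normal {M : Subgroup G} [M.Normal] (hM : IsCoatom M) :
    M.index.Prime := by
  let q := QuotientGroup.mk' M
  obtain ⟨g, -, hg⟩ := SetLike.exists_of_lt hM.lt_top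
  have hgen : M ⊔ zpowers g = ⊤ := hM.2 _ (left_lt_sup.2 (by rwa [zpowers_le]))
  have cyclic_map : IsCyclic ((⊤ : Subgroup G).map q) :=
    (isCyclic_map_iff_exists_ker_sup_zpowers q le_top).2 ⟨g, by rwa [QuotientGroup.ker_mk']⟩
  rw [map_top_of_surjective q (QuotientGroup.mk'_surjective M), topEquiv.isCyclic] at cyclic_map
  have : Nontrivial (G ⧸ M) := QuotientGroup.nontrivial_iff.2 hM.1
  have : IsSimpleGroup (G ⧸ M) := by
    refine ⟨fun K _ => ?_⟩
    have hMK : M ≤ K.comap q := QuotientGroup.le_comap_mk' M K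
    rw [← map_comap_eq_self_of_surjective (QuotientGroup.mk'_surjective M) K]
    rcases hM.le_iff.1 hMK with h | h
    · exact .inr (by rw [h, map_top_of_surjective q (QuotientGroup.mk'_surjective M)])
    · exact .inl (by rw [h, QuotientGroup.map_mk'_self])
  let _ : CommGroup (G ⧸ M) := IsCyclic.commGroup
  exact IsSimpleGroup.prime_card

theorem normal_of_le_zpowers {b : G} [(zpowers b).Normal] {E : Subgroup G} (hE : E ≤ zpowers b) :
    E.Normal := by
  refine ⟨fun x hx g => ?_⟩
  obtain ⟨k, rfl⟩ := hE hx
  obtain ⟨m, hm⟩ := Normal.conj_mem ‹_› b (mem_zpowers b) g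
  have : g * b ^ k * g⁻¹ = (b ^ k) ^ m := by
    rw [← conj_zpow, ← hm, ← zpow_mul, ← zpow_mul, mul_comm]
  rw [this]
  exact E.zpow_mem hx m

theorem NormalCyclicStep.normal_of_le_of_le {A B E : Subgroup G} (h : NormalCyclicStep A B)
    (hAE : A ≤ E) (hEB : E ≤ B) : E.Normal := by
  obtain ⟨hA, hB, b, rfl⟩ := h
  have map_sup_zpowers : (A ⊔ zpowers b).map (QuotientGroup.mk' A) = zpowers (b : G ⧸ A) := by
    rw [Subgroup.map_sup, QuotientGroup.map_mk'_self, bot_sup_eq, MonoidHom.map_zpowers]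
    rfl
  have : (zpowers (b : G ⧸ A)).Normal :=
    map_sup_zpowers ▸ hB.map _ (QuotientGroup.mk'_surjective A)
  have hEn : (E.map (QuotientGroup.mk' A)).Normal :=
    normal_of_le_zpowers ((map_mono hEB).trans_eq map_sup_zpowers)
  have := hEn.comap (QuotientGroup.mk' A)
  rwa [comap_map_eq_self (by rwa [QuotientGroup.ker_mk'])] at this

theorem relIndex_eq_index_of_sup_eq_top [Finite G] {M B : Subgroup G} [B.Normal]
    (h : M ⊔ B = ⊤) : M.relIndex B = M.index := by
  have relIndex_eq : B.relIndex M = B.index := by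
    rw [← relIndex_sup_right, h, relIndex_top_right]
  refine Nat.eq_of_mul_eq_mul_right (Nat.pos_of_ne_zero (index_ne_zero_of_finite (H := B))) ?_
  calc M.relIndex B * B.index = (M ⊓ B).index := by
        rw [← inf_relIndex_right, relIndex_mul_index inf_le_right]
    _ = B.relIndex M * M.index := by
        rw [← inf_relIndex_left, relIndex_mul_index inf_le_left]
    _ = M.index * B.index := by rw [relIndex_eq, mul_comm]

theorem NormalCyclicStep.isCoatom_subgroupOf {A B M : Subgroup G} (h : NormalCyclicStep A B)
    (hM : IsCoatom M) (hAM : A ≤ M) (hBM : ¬ B ≤ M) : IsCoatom (M.subgroupOf B) := by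
  refine ⟨mt subgroupOf_eq_top.1 hBM, fun E hE => eq_top_iff.2 fun b _ => ?_⟩
  obtain ⟨x, hxE, hxM⟩ := SetLike.exists_of_lt hE
  have hAE : A ≤ E.map B.subtype := by
    rw [← inf_eq_left.2 h.le, ← subgroupOf_map_subtype]
    exact map_mono ((subgroupOf_mono _ hAM).trans hE.le)
  have : (E.map B.subtype).Normal := h.normal_of_le_of_le hAE (map_subtype_le E)
  have hsup : M ⊔ E.map B.subtype = ⊤ :=
    hM.2 _ (left_lt_sup.2 fun hle => hxM (hle (mem_map_of_mem _ hxE)))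
  obtain ⟨m, hm, _, ⟨e, he, rfl⟩, hme⟩ :=
    mem_sup_of_normal_right.1 (hsup ▸ mem_top (b : G))
  have hbe : b * e⁻¹ ∈ M.subgroupOf B := by
    simpa [mem_subgroupOf, ← hme] using hm
  exact (E.mul_mem_cancel_right (E.inv_mem he)).1 (hE.le hbe)

theorem NormalCyclicSeries.prime_index [Finite G] {D M : Subgroup G}
    (h : NormalCyclicSeries D ⊤) (hDM : D ≤ M) (hM : IsCoatom M) : M.index.Prime := by
  obtain ⟨A, B, hAB, hAM, hBM⟩ :=
    exists_step_of_reflTransGen (p := (· ≤ M)) h hDM (fun hle => hM.1 (top_le_iff.1 hle))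
  have := hAB.normal_right
  have : (M ⊓ B).Normal := hAB.normal_of_le_of_le (le_inf hAM hAB.le) inf_le_right
  have : (M.subgroupOf B).Normal := inf_subgroupOf_right M B ▸ inferInstance
  rw [← relIndex_eq_index_of_sup_eq_top (hM.2 _ (left_lt_sup.2 hBM))]
  exact prime_index_of_isCoatom_of_normal (hAB.isCoatom_subgroupOf hM hAM hBM)

/-- One step of a chain witnessing that a subgroup is `K`-`𝔘`-subnormal. -/
def KUSubnormalStep (A B : Subgroup G) : Prop :=
  A ≤ B ∧ ((A.subgroupOf B).Normal ∨ IsSupersoluble (B ⧸ (A.subgroupOf B).normalCore))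

theorem isKUSubnormalIn_iff {A B : Subgroup G} :
    IsKUSubnormalIn A B ↔ Relation.ReflTransGen KUSubnormalStep A B :=
  (reflTransGen_iff_exists_fin_chain (r := KUSubnormalStep)).symm

theorem KUSubnormalStep.prime_index [Finite G] {A B L : Subgroup G} (h : KUSubnormalStep A B)
    (hL : L ≤ B) (hA : IsCoatom (A.subgroupOf L)) : (A.subgroupOf L).index.Prime := by
  rcases h.2 with hnormal | hss
  · have : (A.subgroupOf L).Normal := hnormal.comap (inclusion hL)
    exact prime_index_of_isCoatom_of_normal hA
  · have hseries := (normalCyclicSeries_top_of_isSupersoluble_quotient _ hss).comap (inclusion hL)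
    exact hseries.prime_index (comap_mono (normalCore_le _)) hA

theorem IsKUSubnormal.prime_index [Finite G] {L M : Subgroup G} (hML : IsMaximalIn M L)
    (hM : IsKUSubnormal M) : (M.subgroupOf L).index.Prime := by
  obtain ⟨A, B, hAB, hAM, hBM⟩ := exists_step_of_reflTransGen
    (p := fun X => X.subgroupOf L = M.subgroupOf L) (isKUSubnormalIn_iff.1 hM) rfl
    (fun h => hML.2.1 (h ▸ top_subgroupOf L))
  have hlt : M.subgroupOf L < B.subgroupOf L :=
    hAM ▸ (subgroupOf_mono _ hAB.1).lt_of_ne (hAM ▸ Ne.symm hBM)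
  have hLB : L ≤ B := subgroupOf_eq_top.1 (hML.2.2 _ hlt)
  rw [← hAM]
  exact hAB.prime_index hLB (hAM ▸ hML.2)

end PrimeIndex

section Sylow

variable {G : Type*} [Group G] [Finite G] {p : ℕ} [Fact p.Prime]

theorem index_modEq_one_of_normalizer_le (P : Sylow p G) {M : Subgroup G}
    (hPM : normalizer (P : Set G) ≤ M) : M.index ≡ 1 [MOD p] := by
  have hle : (P : Subgroup G) ≤ M := le_normalizer.trans hPM
  have index_G : (normalizer (P : Set G)).index ≡ 1 [MOD p] :=
    P.card_eq_index_normalizer ▸ card_sylow_modEq_one p G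
  have index_M : (normalizer (P : Set G)).relIndex M ≡ 1 [MOD p] := by
    have normalizer_eq :
        normalizer (P.subtype hle : Set M) = (normalizer (P : Set G)).subgroupOf M :=
      (subgroupOf_normalizer_eq hle).symm
    rw [relIndex, ← normalizer_eq, ← (P.subtype hle).card_eq_index_normalizer]
    exact card_sylow_modEq_one p M
  calc M.index = 1 * M.index := (one_mul _).symm
    _ ≡ (normalizer (P : Set G)).relIndex M * M.index [MOD p] := index_M.symm.mul_right _
    _ = (normalizer (P : Set G)).index := relIndex_mul_index hPM
    _ ≡ 1 [MOD p] := index_G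

theorem sylow_normal_of_prime_index (hG : ∀ M : Subgroup G, IsCoatom M → M.index.Prime)
    (hp : ∀ q : ℕ, q.Prime → q ∣ Nat.card G → q ≤ p) (P : Sylow p G) :
    (P : Subgroup G).Normal := by
  refine normalizer_eq_top_iff.1 (by_contra fun hne => ?_)
  obtain ⟨M, hM, hPM⟩ := (eq_top_or_exists_le_coatom _).resolve_left hne
  have hle : M.index ≤ p := hp _ (hG M hM) M.index_dvd_card
  have hlt := (hG M hM).one_lt
  have hdvd : p ∣ M.index - 1 :=
    (Nat.modEq_iff_dvd' hlt.le).1 (index_modEq_one_of_normalizer_le P hPM).symm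
  have := Nat.le_of_dvd (Nat.sub_pos_of_lt hlt) hdvd
  lia

end Sylow

section Complement

variable {G : Type*} [Group G]

theorem IsMinimalNormal.isComplement'_of_isCoatom {N M : Subgroup G} (hN : IsMinimalNormal N)
    [IsMulCommutative N] (hM : IsCoatom M) (hNM : ¬ N ≤ M) : IsComplement' N M := by
  have := hN.1
  have hsup : N ⊔ M = ⊤ := hM.2 _ (right_lt_sup.2 hNM)
  have hnormal : (N ⊓ M).Normal := by
    rw [← normalizer_eq_top_iff, eq_top_iff, ← hsup]
    refine sup_le ?_ ?_
    · exact (le_centralizer N).trans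
        ((centralizer_le inf_le_left).trans (centralizer_le_normalizer _))
    · refine le_trans ?_ inf_normalizer_le_normalizer_inf
      rw [normalizer_eq_top, top_inf_eq]
      exact le_normalizer
  have hbot : N ⊓ M = ⊥ := by
    by_contra hne
    exact hNM (inf_eq_left.1 (hN.2.2 _ hnormal inf_le_left hne))
  refine isComplement'_of_disjoint_and_mul_eq_univ (disjoint_iff.2 hbot) ?_
  rw [← normal_mul, hsup, coe_top]

theorem exists_invariant_isCompl_of_coprime {V Q : Type*} [CommGroup V] [Group Q] [Finite Q]
    {p : ℕ} [Fact p.Prime] (hV : ∀ x : V, x ^ p = 1) (hQ : (Nat.card Q).Coprime p)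
    (φ : Q →* MulAut V) {N : Subgroup V} (hN : ∀ q, ∀ x ∈ N, φ q x ∈ N) :
    ∃ W : Subgroup V, (∀ q, ∀ x ∈ W, φ q x ∈ W) ∧ IsCompl N W := by
  let _ : Module (ZMod p) (Additive V) := AddCommGroup.zmodModule (n := p) (fun x => hV x.toMul)
  let ρ : Representation (ZMod p) Q (Additive V) :=
    { toFun q := (MonoidHom.toAdditive (φ q).toMonoidHom).toZModLinearMap p
      map_one' := by rw [map_one]; rfl
      map_mul' q r := by rw [map_mul]; rfl }
  have : NeZero (Nat.card Q : ZMod p) := ⟨((ZMod.isUnit_iff_coprime _ p).2 hQ).ne_zero⟩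
  let e : Subgroup V ≃o Submodule (ZMod p) (Additive V) :=
    Subgroup.toAddSubgroup.trans (AddSubgroup.toZModSubmodule p)
  let S : Subrepresentation ρ := ⟨e N, fun q x hx => hN q x.toMul hx⟩
  obtain ⟨T, hST⟩ := exists_isCompl S
  refine ⟨e.symm T.toSubmodule, fun q x hx => T.apply_mem_toSubmodule q hx, ?_⟩
  rw [e.isCompl_iff, e.apply_symm_apply, isCompl_iff, disjoint_iff, codisjoint_iff]
  exact ⟨congrArg Subrepresentation.toSubmodule hST.inf_eq_bot,
    congrArg Subrepresentation.toSubmodule hST.sup_eq_top⟩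

open scoped IsMulCommutative in
theorem exists_normal_complement_in_of_coprime {p : ℕ} [Fact p.Prime] {N P Q : Subgroup G}
    [Finite Q] [N.Normal] [P.Normal] [IsMulCommutative P] (hNP : N ≤ P) (hP : ∀ x ∈ P, x ^ p = 1)
    (hQ : (Nat.card Q).Coprime p) (hPQ : P ⊔ Q = ⊤) :
    ∃ W : Subgroup G, W.Normal ∧ Disjoint N W ∧ N ⊔ W = P := by
  obtain ⟨W, hWQ, hNW⟩ := exists_invariant_isCompl_of_coprime (V := P) (p := p)
    (fun x => Subtype.ext (hP x x.2)) hQ ((MulAut.conjNormal (H := P)).comp Q.subtype)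
    (N := N.subgroupOf P) (fun q x hx => Normal.conj_mem (H := N) ‹_› x hx q)
  have map_N : (N.subgroupOf P).map P.subtype = N := map_subgroupOf_eq_of_le hNP
  refine ⟨W.map P.subtype, ?_, ?_, ?_⟩
  · rw [← normalizer_eq_top_iff, eq_top_iff, ← hPQ]
    refine sup_le ?_ ?_
    · exact (le_centralizer P).trans
        ((centralizer_le (map_subtype_le W)).trans (centralizer_le_normalizer _))
    · rw [le_normalizer_iff]
      rintro q hq _ ⟨w, hw, rfl⟩
      exact ⟨_, hWQ ⟨q, hq⟩ w hw, rfl⟩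
  · rw [← map_N]
    exact disjoint_map P.subtype_injective hNW.disjoint
  · conv_lhs => rw [← map_N]
    rw [← Subgroup.map_sup, hNW.sup_eq_top, ← MonoidHom.range_eq_map, P.range_subtype]

theorem exists_isCoatom_not_le [Finite G] {p : ℕ} [Fact p.Prime] (P : Sylow p G)
    [(P : Subgroup G).Normal] [IsMulCommutative (P : Subgroup G)] (hP : ∀ x ∈ P, x ^ p = 1)
    {N : Subgroup G} [N.Normal] (hNP : N ≤ P) (hN : N ≠ ⊥) : ∃ M, IsCoatom M ∧ ¬ N ≤ M := by
  obtain ⟨Q, hPQ⟩ := exists_right_complement'_of_coprime P.card_coprime_index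
  have hQ : (Nat.card Q).Coprime p := by
    rw [← hPQ.symm.index_eq_card]
    exact (((Fact.out : p.Prime).coprime_iff_not_dvd).2 P.not_dvd_index).symm
  obtain ⟨W, hW, hNW, hsup⟩ :=
    exists_normal_complement_in_of_coprime hNP hP hQ hPQ.sup_eq_top
  have hdisj : Disjoint N (W ⊔ Q) := by
    refine disjoint_def.2 fun hxN hxWQ => ?_
    obtain ⟨w, hw, q, hq, rfl⟩ := mem_sup_of_normal_left.1 hxWQ
    have hq1 : q = 1 := disjoint_def.1 hPQ.disjoint
      (((P : Subgroup G).mul_mem_cancel_left (hsup ▸ mem_sup_right hw)).1 (hNP hxN)) hq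
    rw [hq1, mul_one] at hxN ⊢
    exact disjoint_def.1 hNW hxN hw
  have htop : N ⊔ (W ⊔ Q) = ⊤ := by rw [← sup_assoc, hsup, hPQ.sup_eq_top]
  obtain ⟨M, hM, hWQM⟩ := (eq_top_or_exists_le_coatom (W ⊔ Q)).resolve_left
    fun h => hN (disjoint_top.1 (h ▸ hdisj))
  exact ⟨M, hM, fun hNM => hM.1 (top_le_iff.1 (htop ▸ sup_le hNM hWQM))⟩

end Complement

section CyclicSteps

open scoped commutatorElement

variable {G : Type*} [Group G]

theorem conjNormal_eq_one_iff {N : Subgroup G} [N.Normal] {g : G} :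
    MulAut.conjNormal (H := N) g = 1 ↔ g ∈ centralizer (N : Set G) := by
  simp only [MulEquiv.ext_iff, Subtype.ext_iff, MulAut.conjNormal_apply, MulAut.one_apply,
    mul_inv_eq_iff_eq_mul, mem_centralizer_iff, Subtype.forall, SetLike.mem_coe]
  exact forall₂_congr fun _ _ => eq_comm

theorem commutatorElement_mem_centralizer_of_isCyclic (C : Subgroup G) [C.Normal] [IsCyclic C]
    (g k : G) : ⁅g, k⁆ ∈ centralizer (C : Set G) := by
  rw [← conjNormal_eq_one_iff, map_commutatorElement]
  apply (IsCyclic.mulAutMulEquiv C).injective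
  rw [map_commutatorElement, map_one, commutatorElement_eq_one_iff_mul_comm, mul_comm]

theorem pow_totient_mem_centralizer_of_isCyclic (C : Subgroup G) [C.Normal] [Finite C]
    [IsCyclic C] (g : G) : g ^ (Nat.card C).totient ∈ centralizer (C : Set G) := by
  rw [← conjNormal_eq_one_iff, map_pow, ← IsCyclic.card_mulAut C, pow_card_eq_one']

/-- The centralizer `C_G(B / A)` of a factor of `G`: the elements `g` such that
`⁅g, x⁆ ∈ A` for all `x ∈ B`. -/
def factorCentralizer (A B : Subgroup G) [A.Normal] : Subgroup G :=
  (centralizer (B.map (QuotientGroup.mk' A) : Set (G ⧸ A))).comap (QuotientGroup.mk' A)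

theorem mem_factorCentralizer_iff {A B : Subgroup G} [A.Normal] {g : G} :
    g ∈ factorCentralizer A B ↔ ∀ x ∈ B, ⁅g, x⁆ ∈ A := by
  simp only [factorCentralizer, mem_comap, mem_centralizer_iff_commutator_eq_one, coe_map,
    Set.forall_mem_image, SetLike.mem_coe, ← map_commutatorElement, ← MonoidHom.mem_ker,
    QuotientGroup.ker_mk']
  refine forall₂_congr fun x _ => ?_
  rw [← inv_mem_iff, commutatorElement_inv]

instance normal_factorCentralizer (A B : Subgroup G) [A.Normal] [B.Normal] :
    (factorCentralizer A B).Normal :=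
  haveI : (B.map (QuotientGroup.mk' A)).Normal :=
    Normal.map ‹_› _ (QuotientGroup.mk'_surjective A)
  Normal.comap inferInstance _

/-- The elements of `G` that act trivially by conjugation on `B / A` for every normal cyclic step
`A ≤ B` with `B ≤ P`. -/
def stepCentralizer (P : Subgroup G) : Subgroup G :=
  ⨅ (A : Subgroup G) (B : Subgroup G) (h : NormalCyclicStep A B) (_ : B ≤ P),
    haveI := h.normal_left
    factorCentralizer A B

theorem mem_stepCentralizer_iff {P : Subgroup G} {g : G} :
    g ∈ stepCentralizer P ↔
      ∀ A B : Subgroup G, NormalCyclicStep A B → B ≤ P → ∀ x ∈ B, ⁅g, x⁆ ∈ A := by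
  simp only [stepCentralizer, mem_iInf, mem_factorCentralizer_iff]

instance normal_stepCentralizer (P : Subgroup G) : (stepCentralizer P).Normal :=
  normal_iInf_normal fun _ => normal_iInf_normal fun _ => normal_iInf_normal fun h =>
    normal_iInf_normal fun _ =>
      haveI := h.normal_left
      haveI := h.normal_right
      inferInstance

theorem NormalCyclicStep.isCyclic_map_mk' {A B : Subgroup G} [A.Normal]
    (h : NormalCyclicStep A B) : IsCyclic (B.map (QuotientGroup.mk' A)) := by
  rw [isCyclic_map_iff_exists_ker_sup_zpowers _ (by simpa only [QuotientGroup.ker_mk'] using h.le),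
    QuotientGroup.ker_mk']
  exact h.exists_sup_zpowers_eq

theorem commutatorElement_mem_stepCentralizer (P : Subgroup G) (g k : G) :
    ⁅g, k⁆ ∈ stepCentralizer P := by
  simp only [stepCentralizer, mem_iInf]
  intro A B h _
  have := h.normal_left
  have := h.normal_right.map _ (QuotientGroup.mk'_surjective A)
  have := h.isCyclic_map_mk'
  rw [factorCentralizer, mem_comap, map_commutatorElement]
  exact commutatorElement_mem_centralizer_of_isCyclic _ _ _

theorem pow_totient_card_mem_stepCentralizer (P : Subgroup G) [Finite P] (g : G) :
    g ^ (Nat.card P).totient ∈ stepCentralizer P := by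
  simp only [stepCentralizer, mem_iInf]
  intro A B h hBP
  have := h.normal_left
  have := h.normal_right.map _ (QuotientGroup.mk'_surjective A)
  have := h.isCyclic_map_mk'
  have : Finite B := Finite.of_injective _ (inclusion_injective hBP)
  obtain ⟨c, hc⟩ := Nat.totient_dvd_of_dvd
    ((B.card_map_dvd (QuotientGroup.mk' A)).trans (card_dvd_of_le hBP))
  have : Finite (B.map (QuotientGroup.mk' A)) :=
    Finite.of_surjective _ ((QuotientGroup.mk' A).subgroupMap_surjective B)
  rw [factorCentralizer, mem_comap, map_pow, hc, pow_mul]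
  exact pow_mem (pow_totient_mem_centralizer_of_isCyclic _ _) c

theorem commutatorElement_pow_left {s x : G} (h : Commute s ⁅s, x⁆) (m : ℕ) :
    ⁅s ^ m, x⁆ = ⁅s, x⁆ ^ m := by
  have conj_eq : x * s * x⁻¹ = ⁅s, x⁆⁻¹ * s := by
    rw [commutatorElement_def]
    group
  calc ⁅s ^ m, x⁆ = s ^ m * ((x * s * x⁻¹) ^ m)⁻¹ := by
        rw [conj_pow, commutatorElement_def]
        group
    _ = ⁅s, x⁆ ^ m := by
        rw [conj_eq, h.symm.inv_left.mul_pow, mul_inv_rev, mul_inv_cancel_left, inv_pow, inv_inv]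

theorem NormalCyclicSeries.exists_pow_mem_factorCentralizer {N B P : Subgroup G} [N.Normal]
    (h : NormalCyclicSeries N B) (hBP : B ≤ P) {m : ℕ} (hm : ∀ x ∈ P, x ^ m = 1) {r : G}
    (hr : r ∈ stepCentralizer P) : ∃ j, r ^ m ^ j ∈ factorCentralizer N B := by
  simp only [mem_factorCentralizer_iff]
  induction h with
  | refl =>
    exact ⟨0, fun x hx => by
      rw [commutatorElement_def]
      exact mul_mem (Normal.conj_mem ‹_› x hx _) (inv_mem hx)⟩
  | @tail A B _ hAB ih =>
    obtain ⟨j, hj⟩ := ih (hAB.le.trans hBP)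
    set s := r ^ m ^ j
    refine ⟨j + 1, fun x hx => ?_⟩
    have hsx : ⁅s, x⁆ ∈ A :=
      mem_stepCentralizer_iff.1 (pow_mem hr _) A B hAB hBP x hx
    have hcomm : Commute (s : G ⧸ N) ⁅(s : G ⧸ N), (x : G ⧸ N)⁆ := by
      rw [← commutatorElement_eq_one_iff_commute]
      exact (QuotientGroup.eq_one_iff _).2 (hj _ hsx)
    have hpow : ⁅(s : G ⧸ N), (x : G ⧸ N)⁆ ^ m = 1 :=
      congrArg (QuotientGroup.mk' N) (hm _ (hBP (hAB.le hsx)))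
    rw [pow_succ, pow_mul]
    exact (QuotientGroup.eq_one_iff _).1 ((commutatorElement_pow_left hcomm m).trans hpow)

end CyclicSteps

section FrattiniFactor

open scoped commutatorElement

variable {G : Type*} [Group G] {p : ℕ}

/-- The smallest normal subgroup of `P` whose quotient is an elementary abelian `p`-group, as a
subgroup of `G`. When `P` is a finite `p`-group it is the Frattini subgroup of `P`. -/
def elementaryAbelianResidual (p : ℕ) (P : Subgroup G) : Subgroup G :=
  ⁅P, P⁆ ⊔ closure ((· ^ p) '' (P : Set G))

theorem elementaryAbelianResidual_le_iff {P H : Subgroup G} :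
    elementaryAbelianResidual p P ≤ H ↔
      (∀ x ∈ P, ∀ y ∈ P, ⁅x, y⁆ ∈ H) ∧ ∀ x ∈ P, x ^ p ∈ H := by
  simp only [elementaryAbelianResidual, sup_le_iff, commutator_le, closure_le, Set.subset_def,
    Set.forall_mem_image, SetLike.mem_coe]

theorem elementaryAbelianResidual_le (P : Subgroup G) : elementaryAbelianResidual p P ≤ P :=
  elementaryAbelianResidual_le_iff.2
    ⟨fun _ hx _ hy => commutator_le_self P (commutator_mem_commutator hx hy),
      fun _ hx => pow_mem hx p⟩

instance normal_elementaryAbelianResidual (P : Subgroup G) [P.Normal] :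
    (elementaryAbelianResidual p P).Normal := by
  have : (Subgroup.closure ((· ^ p) '' (P : Set G))).Normal := by
    rw [← normalizer_eq_top_iff, eq_top_iff, le_normalizer_closure_iff]
    rintro g - _ ⟨x, hx, rfl⟩
    exact subset_closure ⟨g * x * g⁻¹, Normal.conj_mem ‹_› x hx g, conj_pow⟩
  unfold elementaryAbelianResidual
  infer_instance

theorem isMulCommutative_of_elementaryAbelianResidual_eq_bot {P : Subgroup G}
    (h : elementaryAbelianResidual p P = ⊥) : IsMulCommutative P :=
  commutator_self_eq_bot_iff.1 (le_bot_iff.1 (le_sup_left.trans h.le))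

theorem pow_eq_one_of_elementaryAbelianResidual_eq_bot {P : Subgroup G}
    (h : elementaryAbelianResidual p P = ⊥) {x : G} (hx : x ∈ P) : x ^ p = 1 :=
  mem_bot.1 ((elementaryAbelianResidual_le_iff.1 h.le).2 x hx)

theorem elementaryAbelianResidual_le_centralizer_factorCentralizer {N P : Subgroup G} [N.Normal]
    (hN : ∀ x ∈ N, x ^ p = 1) (hNP : N ≤ centralizer (P : Set G)) :
    elementaryAbelianResidual p P ≤ centralizer (factorCentralizer N P : Set G) := by
  have commutator_le : ⁅factorCentralizer N P, P⁆ ≤ N :=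
    Subgroup.commutator_le.2 fun _ hs => mem_factorCentralizer_iff.1 hs
  have commutator_eq_bot : ⁅⁅factorCentralizer N P, P⁆, P⁆ = ⊥ :=
    commutator_eq_bot_iff_le_centralizer.2 (commutator_le.trans hNP)
  refine sup_le ?_ ?_
  · rw [← commutator_eq_bot_iff_le_centralizer]
    exact commutator_commutator_eq_bot_of_rotate
      (by rwa [commutator_comm P]) commutator_eq_bot
  · rw [closure_le]
    rintro _ ⟨x, hx, rfl⟩
    refine mem_centralizer_iff_commutator_eq_one.2 fun s hs => ?_
    have hxs : ⁅x, s⁆ ∈ N := by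
      rw [← inv_mem_iff, commutatorElement_inv]
      exact mem_factorCentralizer_iff.1 hs x hx
    have hcomm : Commute x ⁅x, s⁆ := mem_centralizer_iff.1 (hNP hxs) x hx
    rw [← commutatorElement_inv, inv_eq_one, commutatorElement_pow_left hcomm, hN _ hxs]

end FrattiniFactor

section MinimalNormal

variable {G : Type*} [Group G] {p : ℕ}

theorem exists_isMinimalNormal_le [Finite G] (H : Subgroup G) [H.Normal] (hH : H ≠ ⊥) :
    ∃ N ≤ H, IsMinimalNormal N := by
  obtain ⟨N, hNH, ⟨hN, hN_ne⟩, hmin⟩ :=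
    (Set.toFinite {N : Subgroup G | N.Normal ∧ N ≠ ⊥}).exists_le_minimal ⟨‹H.Normal›, hH⟩
  exact ⟨N, hNH, hN, hN_ne, fun M hM hMN hM_ne => le_antisymm hMN (hmin ⟨hM, hM_ne⟩ hMN)⟩

theorem IsMinimalNormal.nontrivial {N : Subgroup G} (hN : IsMinimalNormal N) : Nontrivial N :=
  (nontrivial_iff_ne_bot N).2 hN.2.1

theorem IsMinimalNormal.dvd_card [Finite G] [Fact p.Prime] {N : Subgroup G}
    (hN : IsMinimalNormal N) (hp : IsPGroup p N) : p ∣ Nat.card N := by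
  have := hN.nontrivial
  exact hp.card_eq_or_dvd.resolve_left Finite.one_lt_card.ne'

theorem IsMinimalNormal.monoidHom_ext {N : Subgroup G} [N.Normal] (hN : IsMinimalNormal N)
    {φ ψ : N →* N} (hφ : ∀ (g : G) (x : N), φ (MulAut.conjNormal g x) = MulAut.conjNormal g (φ x))
    (hψ : ∀ (g : G) (x : N), ψ (MulAut.conjNormal g x) = MulAut.conjNormal g (ψ x))
    {v : N} (hv : v ≠ 1) (h : φ v = ψ v) : φ = ψ := by
  let E : Subgroup G := (φ.eqLocus ψ).map N.subtype
  have hE : E.Normal := by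
    constructor
    rintro _ ⟨x, hx, rfl⟩ g
    refine ⟨MulAut.conjNormal g x, ?_, rfl⟩
    change φ _ = ψ _
    rw [hφ, hψ, show φ x = ψ x from hx]
  have hE_ne : E ≠ ⊥ := fun hE_bot => hv <|
    Subtype.ext (mem_bot.1 (hE_bot ▸ mem_map_of_mem N.subtype h))
  have hE_eq := hN.2.2 E hE (map_subtype_le _) hE_ne
  ext1 x
  obtain ⟨y, hy, hyx⟩ := hE_eq.ge x.2
  rwa [← Subtype.ext hyx]

open scoped IsMulCommutative in
theorem IsMinimalNormal.pow_eq_one [Finite G] [Fact p.Prime] {N : Subgroup G}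
    (hN : IsMinimalNormal N) [IsMulCommutative N] (hp : IsPGroup p N) (x : N) : x ^ p = 1 := by
  have := hN.1
  obtain ⟨v, hv⟩ := exists_prime_orderOf_dvd_card' p (hN.dvd_card hp)
  have hv_ne : v ≠ 1 := by
    rintro rfl
    exact (Fact.out : p.Prime).ne_one (hv ▸ orderOf_one)
  have hpow : powMonoidHom p = (1 : N →* N) :=
    hN.monoidHom_ext (fun g x => (map_pow _ x p).symm) (fun g x => (map_one _).symm) hv_ne
      (hv ▸ pow_orderOf_eq_one v)
  exact DFunLike.congr_fun hpow x

theorem IsMinimalNormal.le_centralizer_of_forall_exists_pow_mem [Finite G] [Fact p.Prime]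
    {N D : Subgroup G} (hN : IsMinimalNormal N) (hp : IsPGroup p N) [D.Normal]
    (hD : ∀ d ∈ D, ∃ k, d ^ p ^ k ∈ centralizer (N : Set G)) :
    N ≤ centralizer (D : Set G) := by
  have := hN.1
  let φ : D →* MulAut N := MulAut.conjNormal.comp D.subtype
  have hφ : IsPGroup p φ.range := by
    rintro ⟨_, d, rfl⟩
    obtain ⟨k, hk⟩ := hD d d.2
    exact ⟨k, Subtype.ext ((map_pow φ d _).symm.trans (conjNormal_eq_one_iff.2 hk))⟩
  obtain ⟨z, hz, hz_ne⟩ := hφ.exists_fixed_point_of_prime_dvd_card_of_fixed_point N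
    (hN.dvd_card hp) (a := 1) fun f => map_one f.1
  have hz_mem : (z : G) ∈ centralizer (D : Set G) := fun d hd =>
    mul_inv_eq_iff_eq_mul.1 (congrArg Subtype.val (hz ⟨_, ⟨d, hd⟩, rfl⟩))
  refine inf_eq_left.1 (hN.2.2 (N ⊓ centralizer (D : Set G)) inferInstance inf_le_left fun h => ?_)
  exact hz_ne.symm (Subtype.ext (mem_bot.1 (h ▸ ⟨z.2, hz_mem⟩)))

end MinimalNormal

section Eigenvector

open Polynomial

theorem splits_X_pow_prime_pow_mul_pred_sub_one (p k : ℕ) [Fact p.Prime] :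
    (X ^ (p ^ k * (p - 1)) - 1 : (ZMod p)[X]).Splits := by
  have one_lt : 1 < p := (Fact.out : p.Prime).one_lt
  have eq_pow : (X ^ (p ^ k * (p - 1)) - 1 : (ZMod p)[X]) = (X ^ (p - 1) - 1) ^ p ^ k := by
    rw [sub_pow_char_pow, one_pow, ← pow_mul, mul_comm]
  have splits_X_pow_sub_X : (X ^ p - X : (ZMod p)[X]).Splits := by
    simpa only [ZMod.card, Algebra.algebraMap_self, Polynomial.map_id] using
      FiniteField.splits_X_pow_card_sub_X (K := ZMod p) p
  rw [eq_pow]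
  refine (splits_X_pow_sub_X.of_dvd (FiniteField.X_pow_card_sub_X_ne_zero _ one_lt) ⟨X, ?_⟩).pow _
  rw [sub_mul, one_mul, ← pow_succ, Nat.sub_add_cancel one_lt.le]

theorem exists_hasEigenvalue_of_aeval_eq_zero {K V : Type*} [Field K] [AddCommGroup V] [Module K V]
    [FiniteDimensional K V] [Nontrivial V] {f : Module.End K V} {q : K[X]} (hq : q.Splits)
    (hq_ne : q ≠ 0) (hf : aeval f q = 0) : ∃ a, f.HasEigenvalue a := by
  obtain ⟨a, ha⟩ := (hq.of_dvd hq_ne (minpoly.dvd K f hf)).exists_eval_eq_zero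
    (minpoly.degree_pos (Algebra.IsIntegral.isIntegral f)).ne'
  exact ⟨a, Module.End.hasEigenvalue_of_isRoot ha⟩

theorem exists_ne_one_apply_eq_pow {V : Type*} [CommGroup V] [Finite V] [Nontrivial V] {p k : ℕ}
    [Fact p.Prime] (hV : ∀ x : V, x ^ p = 1) {T : Monoid.End V} (hT : T ^ (p ^ k * (p - 1)) = 1) :
    ∃ v, v ≠ 1 ∧ ∃ a : ℕ, T v = v ^ a := by
  let _ : Module (ZMod p) (Additive V) := AddCommGroup.zmodModule (n := p) fun x => hV x.toMul
  let f : Module.End (ZMod p) (Additive V) := (MonoidHom.toAdditive T).toZModLinearMap p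
  have hf : f ^ (p ^ k * (p - 1)) = 1 := by
    ext x
    rw [Module.End.pow_apply]
    exact (congrFun (Monoid.End.coe_pow V T _).symm x).trans (DFunLike.congr_fun hT x)
  have exponent_pos : 0 < p ^ k * (p - 1) :=
    Nat.mul_pos (pow_pos (Fact.out : p.Prime).pos k) (Nat.sub_pos_of_lt (Fact.out : p.Prime).one_lt)
  obtain ⟨a, ha⟩ := exists_hasEigenvalue_of_aeval_eq_zero (f := f)
    (splits_X_pow_prime_pow_mul_pred_sub_one p k) (X_pow_sub_C_ne_zero exponent_pos 1)
    (by rw [map_sub, map_pow, aeval_X, map_one, hf, sub_self])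
  obtain ⟨v, hv, hv_ne⟩ := ha.exists_hasEigenvector
  refine ⟨v.toMul, hv_ne, a.val, ?_⟩
  rw [Module.End.mem_eigenspace_iff, ← ZMod.natCast_zmod_val a, Nat.cast_smul_eq_nsmul] at hv
  exact hv

end Eigenvector

section Huppert

variable {G : Type*} [Group G] {p : ℕ}

open scoped commutatorElement

open scoped IsMulCommutative in
theorem IsMinimalNormal.isCyclic_of_commutator_le [Finite G] [Fact p.Prime] {N : Subgroup G}
    (hN : IsMinimalNormal N) [IsMulCommutative N] (hp : IsPGroup p N)
    (hcomm : ∀ g k : G, ⁅g, k⁆ ∈ centralizer (N : Set G)) {k : ℕ}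
    (hpow : ∀ g : G, g ^ (p ^ k * (p - 1)) ∈ centralizer (N : Set G)) : IsCyclic N := by
  have := hN.1
  have := hN.nontrivial
  have acts_as_power (g : G) : ∃ a : ℕ, ∀ x : N, MulAut.conjNormal g x = x ^ a := by
    let T : Monoid.End N := MulDistribMulAction.toMonoidEnd (MulAut N) N (MulAut.conjNormal g)
    have hT : T ^ (p ^ k * (p - 1)) = 1 := by
      rw [← map_pow, ← map_pow, conjNormal_eq_one_iff.2 (hpow g), map_one]
    have commute_conj (k : G) :
        Commute (MulAut.conjNormal (H := N) g) (MulAut.conjNormal k) := by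
      rw [← commutatorElement_eq_one_iff_commute, ← map_commutatorElement]
      exact conjNormal_eq_one_iff.2 (hcomm g k)
    obtain ⟨v, hv, a, hva⟩ := exists_ne_one_apply_eq_pow (hN.pow_eq_one hp) hT
    have hT_eq : T = powMonoidHom a := hN.monoidHom_ext
      (fun k x => DFunLike.congr_fun (commute_conj k) x) (fun k x => (map_pow _ x a).symm) hv hva
    exact ⟨a, DFunLike.congr_fun hT_eq⟩
  obtain ⟨v, hv⟩ := exists_ne (1 : N)
  have hnormal : (zpowers (v : G)).Normal := by
    refine ⟨fun x hx g => ?_⟩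
    obtain ⟨a, ha⟩ := acts_as_power g
    have conj_eq : g * x * g⁻¹ = x ^ a :=
      congrArg Subtype.val (ha ⟨x, zpowers_le.2 v.2 hx⟩)
    exact conj_eq ▸ pow_mem hx a
  have hv_ne : zpowers (v : G) ≠ ⊥ := by
    rwa [Ne, zpowers_eq_bot, OneMemClass.coe_eq_one]
  exact N.isCyclic_iff_exists_zpowers_eq_top.2 ⟨v, hN.2.2 _ hnormal (zpowers_le.2 v.2) hv_ne⟩

theorem IsMinimalNormal.isCyclic_of_le_elementaryAbelianResidual [Finite G] [Fact p.Prime]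
    {N P : Subgroup G} [P.Normal] (hN : IsMinimalNormal N) (hP : IsPGroup p P)
    (hNP : N ≤ elementaryAbelianResidual p P) (hseries : NormalCyclicSeries N P) : IsCyclic N := by
  have := hN.1
  have hNp : IsPGroup p N := hP.to_le hseries.le
  have central_in_P : N ≤ centralizer (P : Set G) :=
    hN.le_centralizer_of_forall_exists_pow_mem hNp fun d hd => by
      obtain ⟨k, hk⟩ := hP ⟨d, hd⟩
      have hdk : d ^ p ^ k = 1 := congrArg Subtype.val hk
      exact ⟨k, hdk ▸ one_mem _⟩
  have : IsMulCommutative N :=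
    le_centralizer_iff_isMulCommutative.1 (central_in_P.trans (centralizer_le hseries.le))
  obtain ⟨c, hc⟩ := IsPGroup.iff_card.1 hP
  have pow_card (x : G) (hx : x ∈ P) : x ^ p ^ c = 1 :=
    hc ▸ congrArg Subtype.val (pow_card_eq_one' (x := (⟨x, hx⟩ : P)))
  have hΦ := elementaryAbelianResidual_le_centralizer_factorCentralizer
    (fun x hx => congrArg Subtype.val (hN.pow_eq_one hNp ⟨x, hx⟩)) central_in_P
  have step_le : stepCentralizer P ≤ centralizer (N : Set G) :=
    le_centralizer_iff.1 <| hN.le_centralizer_of_forall_exists_pow_mem hNp fun r hr => by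
      obtain ⟨j, hj⟩ := hseries.exists_pow_mem_factorCentralizer le_rfl pow_card hr
      exact ⟨c * j, le_centralizer_iff.1 (hNP.trans hΦ) (pow_mul p c j ▸ hj)⟩
  obtain ⟨k, rfl⟩ : ∃ k, c = k + 1 := by
    refine Nat.exists_eq_succ_of_ne_zero fun hc_zero => ?_
    have hP_card := card_eq_one.1 (by rw [hc, hc_zero, pow_zero] : Nat.card P = 1)
    exact hN.2.1 (le_bot_iff.1 (hP_card ▸ hseries.le))
  have totient_card : (Nat.card P).totient = p ^ k * (p - 1) := by
    rw [hc, Nat.totient_prime_pow_succ Fact.out]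
  exact hN.isCyclic_of_commutator_le hNp
    (fun g k => step_le (commutatorElement_mem_stepCentralizer P g k))
    fun g => step_le (totient_card ▸ pow_totient_card_mem_stepCentralizer P g)

theorem IsMinimalNormal.isCyclic_of_elementaryAbelianResidual_eq_bot [Finite G] [Fact p.Prime]
    {N : Subgroup G} (hN : IsMinimalNormal N) {P : Sylow p G} [(P : Subgroup G).Normal]
    (hNP : N ≤ P) (hP : elementaryAbelianResidual p (P : Subgroup G) = ⊥)
    (hG : ∀ M : Subgroup G, IsCoatom M → M.index.Prime) : IsCyclic N := by
  have := hN.1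
  have := isMulCommutative_of_elementaryAbelianResidual_eq_bot hP
  have : IsMulCommutative N := le_centralizer_iff_isMulCommutative.1 <|
    hNP.trans ((le_centralizer_iff_isMulCommutative.2 this).trans (centralizer_le hNP))
  obtain ⟨M, hM, hNM⟩ := exists_isCoatom_not_le P
    (fun _ => pow_eq_one_of_elementaryAbelianResidual_eq_bot hP) hNP hN.2.1
  have : Fact (Nat.card N).Prime :=
    ⟨(hN.isComplement'_of_isCoatom hM hNM).index_eq_card ▸ hG M hM⟩
  exact isCyclic_of_prime_card rfl

theorem exists_isMinimalNormal_isCyclic [Finite G] [Nontrivial G]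
    (hG : ∀ M : Subgroup G, IsCoatom M → M.index.Prime)
    (hquot : ∀ N : Subgroup G, IsMinimalNormal N → NormalCyclicSeries N ⊤) :
    ∃ N : Subgroup G, IsMinimalNormal N ∧ IsCyclic N := by
  obtain ⟨p, hp, hmax⟩ := (Nat.card G).primeFactors.exists_max_image (fun q => q)
    (Nat.nonempty_primeFactors.2 Finite.one_lt_card)
  have : Fact p.Prime := ⟨Nat.prime_of_mem_primeFactors hp⟩
  obtain ⟨P⟩ : Nonempty (Sylow p G) := inferInstance
  have := sylow_normal_of_prime_index hG
    (fun q hq hqG => hmax q (Nat.mem_primeFactors.2 ⟨hq, hqG, Nat.card_pos.ne'⟩)) P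
  by_cases hΦ : elementaryAbelianResidual p (P : Subgroup G) = ⊥
  · obtain ⟨N, hNP, hN⟩ := exists_isMinimalNormal_le (P : Subgroup G)
      (P.ne_bot_of_dvd_card (Nat.dvd_of_mem_primeFactors hp))
    exact ⟨N, hN, hN.isCyclic_of_elementaryAbelianResidual_eq_bot hNP hΦ hG⟩
  · obtain ⟨N, hNΦ, hN⟩ := exists_isMinimalNormal_le _ hΦ
    have hseries := (hquot N hN).inf (P : Subgroup G)
    rw [inf_eq_left.2 (hNΦ.trans (elementaryAbelianResidual_le _)), top_inf_eq] at hseries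
    exact ⟨N, hN, hN.isCyclic_of_le_elementaryAbelianResidual P.2 hNΦ hseries⟩

theorem prime_index_of_isCoatom_of_surjective {H : Type*} [Group H] {f : G →* H}
    (hf : Function.Surjective f) (hG : ∀ M : Subgroup G, IsCoatom M → M.index.Prime)
    {M : Subgroup H} (hM : IsCoatom M) : M.index.Prime :=
  index_comap_of_surjective M hf ▸ hG _ (isCoatom_comap_of_surjective hf hM)

theorem isSupersoluble_of_prime_index [Finite G]
    (hG : ∀ M : Subgroup G, IsCoatom M → M.index.Prime) : IsSupersoluble G := by
  induction hn : Nat.card G using Nat.strong_induction_on generalizing G with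
  | _ n ih =>
    rw [isSupersoluble_iff]
    rcases subsingleton_or_nontrivial G with hsub | hnt
    · exact Subsingleton.elim (⊤ : Subgroup G) ⊥ ▸ .refl
    have hquot (N : Subgroup G) (hN : IsMinimalNormal N) : NormalCyclicSeries N ⊤ := by
      have := hN.1
      have := hN.nontrivial
      have card_lt : Nat.card (G ⧸ N) < n := by
        rw [← hn, N.card_eq_card_quotient_mul_card_subgroup]
        exact lt_mul_of_one_lt_right Nat.card_pos Finite.one_lt_card
      exact normalCyclicSeries_top_of_isSupersoluble_quotient N <| ih _ card_lt
        (fun M => prime_index_of_isCoatom_of_surjective (QuotientGroup.mk'_surjective N) hG) rfl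
    obtain ⟨N, hN, hcyclic⟩ := exists_isMinimalNormal_isCyclic hG hquot
    obtain ⟨v, hv⟩ := N.isCyclic_iff_exists_zpowers_eq_top.1 hcyclic
    exact (hquot N hN).head ⟨inferInstance, hN.1, v, by rw [bot_sup_eq, hv]⟩

end Huppert

section Maximal

variable {G : Type*} [Group G]

theorem isMaximalIn_map_subtype {L : Subgroup G} {M : Subgroup L} (hM : IsCoatom M) :
    IsMaximalIn (M.map L.subtype) L :=
  ⟨map_subtype_le M, by rwa [subgroupOf, comap_map_eq_self_of_injective L.subtype_injective]⟩

theorem isSupersoluble_of_forall_isMaximalIn_isKUSubnormal [Finite G] {L : Subgroup G}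
    (hL : ∀ M, IsMaximalIn M L → IsKUSubnormal M) : IsSupersoluble L := by
  refine isSupersoluble_of_prime_index fun M hM => ?_
  have hML := isMaximalIn_map_subtype hM
  have hindex := (hL _ hML).prime_index hML
  rwa [subgroupOf, comap_map_eq_self_of_injective L.subtype_injective] at hindex

theorem KUSubnormalStep.of_isSupersoluble {H K : Subgroup G} (hHK : H ≤ K)
    (hK : IsSupersoluble K) : KUSubnormalStep H K :=
  ⟨hHK, .inr (hK.of_surjective (QuotientGroup.mk'_surjective _))⟩

end Maximal

/-- If every `(n+1)`-maximal subgroup of `G` is `K`-`𝔘`-subnormal in `G`, then every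
`(n+2)`-maximal subgroup of `G` is `K`-`𝔘`-subnormal in `G`. -/
theorem succ_nmaximal_KUsubnormal_of_KUsubnormal (G : Type*) [Group G] [Finite G] (n : ℕ)
    (h : ∀ H : Subgroup G, IsNMaximal (n + 1) H → IsKUSubnormal H) :
    ∀ H : Subgroup G, IsNMaximal (n + 2) H → IsKUSubnormal H := by
  rintro H ⟨K, hK, hHK⟩
  obtain ⟨L, hL, hKL⟩ := id hK
  have hL_supersoluble : IsSupersoluble L :=
    isSupersoluble_of_forall_isMaximalIn_isKUSubnormal fun M hML => h M ⟨L, hL, hML⟩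
  have hK_supersoluble : IsSupersoluble K :=
    hL_supersoluble.of_injective (inclusion_injective hKL.1)
  exact isKUSubnormalIn_iff.2
    ((isKUSubnormalIn_iff.1 (h K hK)).head (.of_isSupersoluble hHK.1 hK_supersoluble))
end

section
/- If H is a maximal subgroup of a finite group G and H is K-𝔘-subnormal in G, then the index |G : H| is a prime number. -/
open Subgroup

/-!
Along a chain witnessing the hypothesis, a maximal subgroup `H` must jump to `G` in one step, so
either `H` is normal, and `G ⧸ H` has no proper nontrivial subgroups, or `G ⧸ H_G` is supersoluble.
In the second case, take the first term of a normal series with cyclic factors not contained in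
the maximal subgroup. Modulo the preceding term it is a cyclic normal subgroup `C` supplementing
`H`. Every subgroup of `C` is normal in `G`, so maximality of `H` descends to `C ∩ H` in `C`, and
`|G : H| = |C : C ∩ H|` is prime by the normal case.
-/

theorem exists_castSucc_and_not_succ {n : ℕ} {P : Fin (n + 1) → Prop} (h0 : P 0)
    (hlast : ¬ P (Fin.last n)) : ∃ i : Fin n, P i.castSucc ∧ ¬ P i.succ := by
  by_contra! h
  exact hlast (Fin.induction h0 h (Fin.last n))

section Maximal

variable {G : Type*} [Group G]

theorem prime_card_of_isSimpleOrder_subgroup [IsSimpleOrder (Subgroup G)] :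
    (Nat.card G).Prime := by
  have : Nontrivial G := Subgroup.nontrivial_iff.1 inferInstance
  obtain ⟨g, hg⟩ := exists_ne (1 : G)
  have hgen : zpowers g = ⊤ := (eq_bot_or_eq_top (zpowers g)).resolve_left (zpowers_ne_bot.2 hg)
  have : IsCyclic G := isCyclic_iff_exists_zpowers_eq_top.2 ⟨g, hgen⟩
  exact Group.is_simple_iff_prime_card.1 ⟨fun K _ => eq_bot_or_eq_top K⟩

theorem isCoatom_map_of_surjective_of_ker_le {G' : Type*} [Group G'] {f : G →* G'}
    (hf : Function.Surjective f) {M : Subgroup G} (hM : IsCoatom M) (hker : f.ker ≤ M) :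
    IsCoatom (M.map f) := by
  have hcomap : (M.map f).comap f = M := comap_map_eq_self hker
  refine ⟨fun htop => hM.1 (by rw [← hcomap, htop, comap_top]), fun K hK => ?_⟩
  have hlt : M < K.comap f := hcomap ▸ (comap_lt_comap_of_surjective hf).2 hK
  exact comap_injective hf ((hM.2 _ hlt).trans (comap_top f).symm)

theorem index_prime_of_isCoatom_of_normal {M : Subgroup G} (hM : IsCoatom M) [M.Normal] :
    M.index.Prime := by
  have hbot : IsCoatom (⊥ : Subgroup (G ⧸ M)) := by
    simpa only [QuotientGroup.map_mk'_self] using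
      isCoatom_map_of_surjective_of_ker_le (QuotientGroup.mk'_surjective M) hM
        (QuotientGroup.ker_mk' M).le
  have := isSimpleOrder_iff_isCoatom_bot.2 hbot
  exact prime_card_of_isSimpleOrder_subgroup

theorem characteristic_of_isCyclic [IsCyclic G] (K : Subgroup G) : K.Characteristic := by
  refine characteristic_iff_le_comap.2 fun φ x hx => ?_
  obtain ⟨m, hm⟩ := φ.toMonoidHom.map_cyclic
  rw [mem_comap, hm]
  exact K.zpow_mem hx m

theorem relIndex_eq_index_of_sup_eq_top_s6 {N H : Subgroup G} [N.Normal] (h : N ⊔ H = ⊤) :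
    H.relIndex N = H.index := by
  have : MulAction.IsPretransitive N (G ⧸ H) := by
    refine (MulAction.isPretransitive_iff_base ((1 : G) : G ⧸ H)).2 fun x => ?_
    obtain ⟨g, rfl⟩ := QuotientGroup.mk_surjective x
    obtain ⟨n, hn, k, hk, rfl⟩ := mem_sup_of_normal_left.1 (h ▸ mem_top g)
    exact ⟨⟨n, hn⟩, QuotientGroup.eq.2 (by simpa using hk)⟩
  calc
    H.relIndex N = (MulAction.stabilizer G ((1 : G) : G ⧸ H)).relIndex N := by
      rw [MulAction.stabilizer_quotient]
    _ = H.index := MulAction.index_stabilizer_of_transitive N ((1 : G) : G ⧸ H)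

theorem isCoatom_subgroupOf_of_forall_le_normal {M N : Subgroup G} (hM : IsCoatom M)
    (hNM : ¬ N ≤ M) (hN : ∀ K ≤ N, K.Normal) : IsCoatom (M.subgroupOf N) := by
  refine ⟨fun htop => hNM (subgroupOf_eq_top.1 htop), fun K hK => ?_⟩
  have : (K.map N.subtype).Normal := hN _ (map_subtype_le K)
  have hKM : ¬ K.map N.subtype ≤ M := fun hle => hK.not_ge (map_le_iff_le_comap.1 hle)
  have hsup : K.map N.subtype ⊔ M = ⊤ := hM.2 _ (right_lt_sup.2 hKM)
  refine eq_top_iff.2 fun n _ => ?_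
  obtain ⟨_, ⟨k, hk, rfl⟩, m, hm, hkm⟩ := mem_sup_of_normal_left.1 (hsup ▸ mem_top (n : G))
  have hm_eq : ((k⁻¹ * n : N) : G) = m := by
    rw [N.coe_mul, N.coe_inv, ← hkm, N.coe_subtype, inv_mul_cancel_left]
  have hmem : k⁻¹ * n ∈ K := hK.le (mem_subgroupOf.2 (hm_eq ▸ hm))
  exact (K.mul_mem_cancel_left (K.inv_mem hk)).1 hmem

theorem index_prime_of_isCoatom_of_isCyclic_of_not_le {M C : Subgroup G} (hM : IsCoatom M)
    [C.Normal] [IsCyclic C] (hCM : ¬ C ≤ M) : M.index.Prime := by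
  have hnormal : ∀ K ≤ C, K.Normal := fun K hK => by
    have := characteristic_of_isCyclic (K.subgroupOf C)
    exact map_subgroupOf_eq_of_le hK ▸ inferInstance
  rw [← relIndex_eq_index_of_sup_eq_top_s6 (hM.2 _ (right_lt_sup.2 hCM))]
  exact index_prime_of_isCoatom_of_normal (isCoatom_subgroupOf_of_forall_le_normal hM hCM hnormal)

end Maximal

section Supersoluble

variable {G : Type*} [Group G]

theorem isCyclic_map_mk' (A N : Subgroup G) [A.Normal] [IsCyclic (N ⧸ A.subgroupOf N)] :
    IsCyclic (N.map (QuotientGroup.mk' A)) := by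
  let f := (QuotientGroup.mk' A).subgroupMap N
  have hker : A.subgroupOf N ≤ f.ker := fun x hx =>
    Subtype.ext ((QuotientGroup.eq_one_iff (x : G)).2 hx)
  exact isCyclic_of_surjective (QuotientGroup.lift _ f hker)
    (QuotientGroup.lift_surjective_of_surjective _ f (MonoidHom.subgroupMap_surjective _ N) hker)

theorem index_prime_of_isCoatom_of_isSupersoluble {M : Subgroup G} (hM : IsCoatom M)
    (hG : IsSupersoluble G) : M.index.Prime := by
  obtain ⟨n, c, hc, h0, hlast, hstep⟩ := hG
  obtain ⟨i, hle, hnot_le⟩ := exists_castSucc_and_not_succ (P := fun i => c i ≤ M)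
    (h0 ▸ bot_le) (fun h => hM.1 (top_le_iff.1 (hlast ▸ h)))
  have := hc i.castSucc
  have := hc i.succ
  set π := QuotientGroup.mk' (c i.castSucc)
  have hker : π.ker ≤ M := (QuotientGroup.ker_mk' _).trans_le hle
  have hπ : Function.Surjective π := QuotientGroup.mk'_surjective _
  have := (hstep i).2
  have : IsCyclic ((c i.succ).map π) := isCyclic_map_mk' _ _
  have : ((c i.succ).map π).Normal := Normal.map inferInstance π hπ
  rw [← index_map_eq M hπ hker]
  refine index_prime_of_isCoatom_of_isCyclic_of_not_le (C := (c i.succ).map π)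
    (isCoatom_map_of_surjective_of_ker_le hπ hM hker) fun hmap => hnot_le ?_
  rwa [map_le_iff_le_comap, comap_map_eq_self hker] at hmap

theorem index_prime_of_isCoatom_of_isSupersoluble_quotient {A M : Subgroup G} [A.Normal]
    (hM : IsCoatom M) (hA : A ≤ M) (hs : IsSupersoluble (G ⧸ A)) : M.index.Prime := by
  have hsurj := QuotientGroup.mk'_surjective A
  have hker := (QuotientGroup.ker_mk' A).trans_le hA
  rw [← index_map_eq M hsurj hker]
  exact index_prime_of_isCoatom_of_isSupersoluble
    (isCoatom_map_of_surjective_of_ker_le hsurj hM hker) hs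

end Supersoluble

section KUSubnormal

variable {G : Type*} [Group G] {H : Subgroup G}

/-- The condition on a step from `H` up to `K` in a chain witnessing `K`-`𝔘`-subnormality: `H` is
normal in `K`, or `K` modulo the core of `H` in `K` is supersoluble. The containment `H ≤ K` is
not part of it. -/
def IsKUStep (H K : Subgroup G) : Prop :=
  (H.subgroupOf K).Normal ∨ IsSupersoluble (K ⧸ (H.subgroupOf K).normalCore)

theorem IsKUSubnormal.isKUStep_top_of_isCoatom (hsub : IsKUSubnormal H) (hH : IsCoatom H) :
    IsKUStep H ⊤ := by
  obtain ⟨n, c, h0, hlast, hstep⟩ := hsub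
  obtain ⟨i, hi, hne⟩ := exists_castSucc_and_not_succ (P := fun i => c i = H) h0
    (hlast ▸ hH.1.symm)
  have htop : c i.succ = ⊤ := hH.2 _ ((hi ▸ (hstep i).1).lt_of_ne' hne)
  have hstep_i : IsKUStep (c i.castSucc) (c i.succ) := (hstep i).2
  rwa [hi, htop] at hstep_i

end KUSubnormal

theorem index_prime_of_maximal_KUsubnormal_general (G : Type*) [Group G]
    (H : Subgroup G) (hmax : IsCoatom H) (hsub : IsKUSubnormal H) :
    Nat.Prime H.index := by
  have hmax_top : IsCoatom (H.subgroupOf ⊤) :=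
    isCoatom_comap_of_surjective (fun g => ⟨⟨g, mem_top g⟩, rfl⟩) hmax
  rw [← relIndex_top_right]
  rcases hsub.isKUStep_top_of_isCoatom hmax with hnormal | hsupersoluble
  · exact index_prime_of_isCoatom_of_normal hmax_top
  · exact index_prime_of_isCoatom_of_isSupersoluble_quotient hmax_top (normalCore_le _)
      hsupersoluble

/-- If `H` is a maximal subgroup of `G` which is `K`-`𝔘`-subnormal in `G`, then
the index `|G : H|` is a prime. -/
theorem index_prime_of_maximal_KUsubnormal (G : Type*) [Group G] [Finite G]
    (H : Subgroup G) (hmax : IsCoatom H) (hsub : IsKUSubnormal H) :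
    Nat.Prime H.index :=
  index_prime_of_maximal_KUsubnormal_general G H hmax hsub
end
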